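/- Let G be a finite group, p a prime and n ≥ 1 with p^n > 3, and suppose G/Z(G) is isomorphic to PSL₂(𝔽_{p^n}) or to PGL₂(𝔽_{p^n}), where 𝔽_{p^n} is the finite field with p^n elements. Then G is an F_min-group. -/

import Mathlib

open Subgroup

/-- The centraliser of `x` is a minimal centraliser: any non-central element
centraliser contained in it is equal to it. -/
def IsMinCentralizer {G : Type*} [Group G] (x : G) : Prop :=
  ∀ y : G, y ∉ center G →
    centralizer ({y} : Set G) ≤ centralizer ({x} : Set G) →
    centralizer ({y} : Set G) = centralizer ({x} : Set G)

/-- The centre of a subgroup `H`, viewed as a subgroup of the ambient group `G`: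
the elements of `H` commuting with every element of `H`. -/
def subgroupCenter {G : Type*} [Group G] (H : Subgroup G) : Subgroup G :=
  H ⊓ centralizer (H : Set G)

/-- `G` is an `F_min`-group: the centres of any two distinct minimal non-central
element centralisers intersect in the centre of `G`. -/
def IsFminGroup (G : Type*) [Group G] : Prop :=
  ∀ x y : G, x ∉ center G → y ∉ center G → IsMinCentralizer x → IsMinCentralizer y →
    centralizer ({x} : Set G) ≠ centralizer ({y} : Set G) →
    subgroupCenter (centralizer ({x} : Set G)) ⊓ subgroupCenter (centralizer ({y} : Set G))
      = center G

/-- The projective special linear group of degree 2 over `F`. -/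
abbrev PSL2 (F : Type*) [Field F] :=
  Matrix.SpecialLinearGroup (Fin 2) F ⧸ center (Matrix.SpecialLinearGroup (Fin 2) F)

/-- The projective general linear group of degree 2 over `F`. -/
abbrev PGL2 (F : Type*) [Field F] :=
  Matrix.GeneralLinearGroup (Fin 2) F ⧸ center (Matrix.GeneralLinearGroup (Fin 2) F)

/-!
Two distinct minimal centralizers whose centres share a non-central element `z` both lie in `C(z)`,
so it is enough that `C(z)` contains at most one minimal centralizer; this is clear when `C(z)` is
abelian. Let `Z` be a matrix over the image of `z` in `PGL(2, F)`. Matrices whose images commute in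
`PGL(2, F)` commute or anticommute, and in odd characteristic the latter forces both traces to
vanish.

If `Z` has distinct eigenvalues, then its centralizer in `GL(2, F)` has cyclic image in
`PGL(2, F)`, so the preimage in `G` of this image is abelian. If `Z` has a double eigenvalue, then
`C(z)` lies over a root group isomorphic to `F`, and the commutator of lifts is a biadditive map
`B : F × F → Z(G)` with `B (t²u, t²v) = B (u, v)`, because `SL(2, F)` contains the diagonal
matrices. Given `1 + a² = b²`, moving squares across `B` yields
`B (u, b⁻²v) = B (u, v + a⁻²v)`, so `B` vanishes if `1 + a² + a⁴ ≠ 0`; the fields of order `p` or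
`p²` are settled by counting.

This leaves odd characteristic and `tr Z = 0`. If the centralizer of `Z` contributes no elements
of nonzero trace to `G / Z(G)`, then `C(z)` is abelian. Otherwise every minimal centralizer inside
`C(z)` is the preimage in `G` of the image of the centralizer of `Z`.
-/

open scoped commutatorElement

section Centralizers

variable {G : Type*} [Group G]

theorem isMulCommutative_of_le {H K : Subgroup G} [IsMulCommutative K] (h : H ≤ K) :
    IsMulCommutative H :=
  le_centralizer_iff_isMulCommutative.mp <|
    h.trans <| (le_centralizer K).trans <| centralizer_le h

theorem centralizer_singleton_eq_of_le {x z : G} [IsMulCommutative (centralizer {z})]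
    (h : centralizer {x} ≤ centralizer {z}) : centralizer {x} = centralizer {z} :=
  h.antisymm <| (le_centralizer _).trans <| centralizer_le <|
    Set.singleton_subset_iff.mpr <| h <| mem_centralizer_singleton_iff.mpr rfl

theorem IsMinCentralizer.centralizer_eq_of_le {x t : G} (hx : x ∉ center G)
    (hmin : IsMinCentralizer x) (h : centralizer {t} ≤ centralizer {x}) :
    centralizer {t} = centralizer {x} := by
  refine hmin t (fun ht ↦ hx ?_) h
  rw [centralizer_eq_top_iff_subset.mpr (Set.singleton_subset_iff.mpr ht), top_le_iff,
    centralizer_eq_top_iff_subset] at h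
  exact h rfl

theorem IsFminGroup.of_forall_exists_centralizer_eq
    (h : ∀ z ∉ center G, ∃ D : Subgroup G, ∀ x ∉ center G, IsMinCentralizer x →
      centralizer {x} ≤ centralizer {z} → centralizer {x} = D) :
    IsFminGroup G := by
  intro x y hx hy hxmin hymin hxy
  have center_le (w : G) : center G ≤ subgroupCenter (centralizer {w}) :=
    le_inf (center_le_centralizer _) (center_le_centralizer _)
  refine le_antisymm (fun z ⟨⟨_, hzx⟩, _, hzy⟩ ↦ ?_) (le_inf (center_le x) (center_le y))
  by_contra hz
  obtain ⟨D, hD⟩ := h z hz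
  have le_of_mem {w : G} (hzw : z ∈ centralizer (centralizer {w} : Set G)) :
      centralizer {w} ≤ centralizer {z} :=
    fun g hg ↦ mem_centralizer_singleton_iff.mpr (hzw g hg)
  exact hxy ((hD x hx hxmin (le_of_mem hzx)).trans (hD y hy hymin (le_of_mem hzy)).symm)

-- The central element `z` accounts for one factor `p`, so `C(z)` is cyclic modulo its centre.
theorem isMulCommutative_centralizer_of_relIndex_center_dvd_sq {p : ℕ} (hp : p.Prime) {z : G}
    (hz : z ∉ center G) (h : (center G).relIndex (centralizer {z}) ∣ p ^ 2) :
    IsMulCommutative (centralizer {z}) := by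
  have := Fact.mk hp
  set C := centralizer {z}
  have hle : (center G).subgroupOf C ≤ center C := fun c hc ↦
    mem_center_iff.mpr fun g ↦ Subtype.ext (mem_center_iff.mp hc g)
  have hmul := relIndex_mul_index hle
  have hne : ((center G).subgroupOf C).relIndex (center C) ≠ 1 := fun h1 ↦ by
    have hzC : z ∈ C := mem_centralizer_singleton_iff.mpr rfl
    have hzZ : (⟨z, hzC⟩ : C) ∈ center C := mem_center_iff.mpr fun g ↦
      Subtype.ext (mem_centralizer_singleton_iff.mp g.2)
    exact hz (relIndex_eq_one.mp h1 hzZ)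
  have hdvd : ((center G).subgroupOf C).relIndex (center C) * (center C).index ∣ p ^ 2 := hmul ▸ h
  have hp_dvd : p ∣ ((center G).subgroupOf C).relIndex (center C) := by
    obtain ⟨k, -, hk⟩ := (Nat.dvd_prime_pow hp).mp (dvd_of_mul_right_dvd hdvd)
    rw [hk] at hne ⊢
    exact dvd_pow_self p fun h0 ↦ hne (by rw [h0, pow_zero])
  have hindex : (center C).index ∣ p :=
    Nat.dvd_of_mul_dvd_mul_left hp.pos <| (mul_dvd_mul_right hp_dvd _).trans (sq p ▸ hdvd)
  have : IsCyclic (C ⧸ center C) := isCyclic_of_card_dvd_prime hindex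
  exact isMulCommutative_of_isCyclic_quotient_center_self C

end Centralizers

theorem isCyclic_range_of_ker_le {G H K : Type*} [Group G] [Group H] [Group K] {f : G →* H}
    {g : G →* K} (h : g.ker ≤ f.ker) [IsCyclic g.range] : IsCyclic f.range := by
  obtain ⟨y, hy⟩ := g.range.isCyclic_iff_exists_zpowers_eq_top.mp ‹_›
  obtain ⟨x, rfl⟩ : y ∈ g.range := hy ▸ mem_zpowers y
  refine f.range.isCyclic_iff_exists_zpowers_eq_top.mpr ⟨f x, le_antisymm ?_ ?_⟩
  · exact (zpowers_le).mpr ⟨x, rfl⟩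
  · rintro - ⟨z, rfl⟩
    obtain ⟨k, hk⟩ : g z ∈ zpowers (g x) := hy ▸ ⟨z, rfl⟩
    have hker : f (z⁻¹ * x ^ k) = 1 :=
      h <| by simpa [MonoidHom.mem_ker, inv_mul_eq_one] using hk.symm
    exact ⟨k, (inv_mul_eq_one.mp <| by simpa using hker).symm⟩

section CentralKernel

variable {G H : Type*} [Group G] [Group H] {φ : G →* H} (hφ : φ.ker ≤ center G)
include hφ

theorem commutatorElement_eq_of_map_eq_left {a a' : G} (ha : φ a = φ a') (b : G) :
    ⁅a, b⁆ = ⁅a', b⁆ := by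
  have hc : ∀ g, Commute (a * a'⁻¹) g := fun g ↦
    (mem_center_iff.mp (hφ (by simp [MonoidHom.mem_ker, ha])) g).symm
  calc ⁅a, b⁆ = ⁅a * a'⁻¹ * a', b⁆ := by rw [inv_mul_cancel_right]
    _ = ⁅a', b⁆ := by
      rw [commutatorElement_mul_left_eq_conj_mul, (hc _).eq, mul_inv_cancel_right,
        commutatorElement_eq_one_iff_commute.mpr (hc b), mul_one]

theorem commutatorElement_eq_of_map_eq {a a' b b' : G} (ha : φ a = φ a') (hb : φ b = φ b') :
    ⁅a, b⁆ = ⁅a', b'⁆ := by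
  rw [commutatorElement_eq_of_map_eq_left hφ ha, ← commutatorElement_inv,
    commutatorElement_eq_of_map_eq_left hφ hb, commutatorElement_inv]

theorem commute_commutatorElement_of_commute_map {a b : G} (h : Commute (φ a) (φ b)) (g : G) :
    Commute ⁅a, b⁆ g := by
  refine (mem_center_iff.mp (hφ ?_) g).symm
  rw [MonoidHom.mem_ker, map_commutatorElement, commutatorElement_eq_one_iff_commute.mpr h]

theorem commutatorElement_mul_left_of_commute_map {a b c : G} (h : Commute (φ b) (φ c)) :
    ⁅a * b, c⁆ = ⁅a, c⁆ * ⁅b, c⁆ := by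
  have hcomm := commute_commutatorElement_of_commute_map hφ h
  rw [commutatorElement_mul_left_eq_conj_mul, ← (hcomm a).eq, mul_inv_cancel_right, (hcomm _).eq]

theorem commutatorElement_mul_right_of_commute_map {a b c : G} (h : Commute (φ a) (φ c)) :
    ⁅a, b * c⁆ = ⁅a, b⁆ * ⁅a, c⁆ := by
  have hcomm := commute_commutatorElement_of_commute_map hφ h
  rw [commutatorElement_mul_right_eq_mul_conj, mul_assoc, mul_assoc, ← mul_assoc b,
    ← (hcomm b).eq, mul_inv_cancel_right]

theorem isMulCommutative_centralizer_of_card_map_dvd_sq {p : ℕ} (hp : p.Prime) {z : G}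
    (hz : z ∉ center G) (h : Nat.card ((centralizer {z}).map φ) ∣ p ^ 2) :
    IsMulCommutative (centralizer {z}) :=
  isMulCommutative_centralizer_of_relIndex_center_dvd_sq hp hz <|
    (relIndex_dvd_of_le_left _ hφ).trans <| (relIndex_ker (centralizer {z}) φ).symm ▸ h

end CentralKernel

section RootGroup

variable {F : Type*} [Field F]

theorem exists_prime_card_dvd_sq_or_lt_card [Finite F] :
    ∃ p : ℕ, p.Prime ∧
      (Nat.card F ∣ p ^ 2 ∨ 4 < Nat.card F ∧ ((2 : F) ≠ 0 → 13 < Nat.card F)) := by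
  have := Fintype.ofFinite F
  obtain ⟨p, _, n, hp, hn⟩ := FiniteField.card' F
  rw [Nat.card_eq_fintype_card, hn]
  refine ⟨p, hp, or_iff_not_imp_left.mpr fun hndvd ↦ ?_⟩
  have hn3 : 3 ≤ (n : ℕ) := by
    by_contra! hlt
    exact hndvd (pow_dvd_pow p (Nat.lt_succ_iff.mp hlt))
  have hpow : p ^ 3 ≤ p ^ (n : ℕ) := Nat.pow_le_pow_right hp.pos hn3
  refine ⟨?_, fun h2 ↦ ?_⟩
  · have := Nat.pow_le_pow_left hp.two_le 3
    lia
  · have hp2 : p ≠ 2 := by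
      rintro rfl
      exact h2 (CharP.cast_eq_zero F 2)
    have := Nat.pow_le_pow_left (hp.two_le.lt_of_ne' hp2 : 3 ≤ p) 3
    lia

open Polynomial in
theorem exists_one_add_sq_eq_sq [Finite F] (h4 : 4 < Nat.card F)
    (h13 : (2 : F) ≠ 0 → 13 < Nat.card F) :
    ∃ a b : F, a ≠ 0 ∧ b ≠ 0 ∧ 1 + a ^ 2 = b ^ 2 ∧ 1 + a ^ 2 + a ^ 4 ≠ 0 := by
  have := Fintype.ofFinite F
  rw [Nat.card_eq_fintype_card] at h4 h13
  by_cases h2 : (2 : F) = 0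
  · let P : F[X] := X * (X + 1) * (X ^ 2 + X + 1)
    have hP : P.Monic := by unfold P; monicity!
    have hdeg : P.natDegree = 4 := by unfold P; compute_degree!
    obtain ⟨a, ha⟩ := exists_eval_ne_zero_of_natDegree_lt_card P hP.ne_zero
      (by rw [hdeg, Cardinal.mk_fintype]; exact_mod_cast h4)
    simp only [P, eval_mul, eval_add, eval_pow, eval_X, eval_one, mul_ne_zero_iff] at ha
    obtain ⟨⟨ha0, ha1⟩, hquad⟩ := ha
    refine ⟨a, a + 1, ha0, ha1, by linear_combination -a * h2, ?_⟩
    have hsq : 1 + a ^ 2 + a ^ 4 = (a ^ 2 + a + 1) ^ 2 := by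
      linear_combination -(a ^ 3 + a ^ 2 + a) * h2
    exact hsq ▸ pow_ne_zero 2 hquad
  -- The affine conic `1 + a² = b²` is parametrized by `a = (m² - 1) / 2m`, `b = (m² + 1) / 2m`.
  · let P : F[X] := X * (X ^ 2 - 1) * (X ^ 2 + 1) *
      ((X ^ 2 - 1) ^ 4 + C 4 * X ^ 2 * (X ^ 2 - 1) ^ 2 + C 16 * X ^ 4)
    have hP : P.Monic := by unfold P; monicity!
    have hdeg : P.natDegree = 13 := by unfold P; compute_degree!
    obtain ⟨m, hm⟩ := exists_eval_ne_zero_of_natDegree_lt_card P hP.ne_zero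
      (by rw [hdeg, Cardinal.mk_fintype]; exact_mod_cast h13 h2)
    simp only [P, eval_mul, eval_add, eval_sub, eval_pow, eval_X, eval_one, eval_C,
      mul_ne_zero_iff] at hm
    obtain ⟨⟨⟨hm, ha⟩, hb⟩, hquart⟩ := hm
    have h2m : 2 * m ≠ 0 := mul_ne_zero h2 hm
    refine ⟨(m ^ 2 - 1) / (2 * m), (m ^ 2 + 1) / (2 * m), div_ne_zero ha h2m,
      div_ne_zero hb h2m, by field_simp; ring, fun h ↦ hquart ?_⟩
    field_simp at h
    linear_combination h

theorem eq_one_of_biadditive_of_sq_mul_invariant {C : Type*} [Group C] (B : F → F → C)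
    (hadd_left : ∀ u u' v, B (u + u') v = B u v * B u' v)
    (hadd_right : ∀ u v v', B u (v + v') = B u v * B u v')
    (hsq : ∀ t ≠ 0, ∀ u v, B (t ^ 2 * u) (t ^ 2 * v) = B u v)
    {a b : F} (ha : a ≠ 0) (hb : b ≠ 0) (hab : 1 + a ^ 2 = b ^ 2) (hne : 1 + a ^ 2 + a ^ 4 ≠ 0)
    (u v : F) : B u v = 1 := by
  have move_sq {t : F} (ht : t ≠ 0) (w : F) : B (t ^ 2 * u) w = B u ((t ^ 2)⁻¹ * w) := by
    rw [← hsq t ht u, mul_inv_cancel_left₀ (pow_ne_zero 2 ht)]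
  have move_sum (w : F) : B u ((b ^ 2)⁻¹ * w) = B u (w + (a ^ 2)⁻¹ * w) := by
    rw [← move_sq hb, ← hab, add_mul, one_mul, hadd_left, move_sq ha, hadd_right]
  set c := 1 + (a ^ 2)⁻¹ - (b ^ 2)⁻¹ with hc
  have hc0 : c ≠ 0 := by
    have : c = (1 + a ^ 2 + a ^ 4) / (a ^ 2 * b ^ 2) := by rw [hc]; field_simp; rw [← hab]; ring
    exact this ▸ div_ne_zero hne (by positivity)
  have hvanish (w : F) : B u (c * w) = 1 := by
    rw [← mul_eq_right (b := B u ((b ^ 2)⁻¹ * w)), ← hadd_right, move_sum]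
    congr 1
    rw [hc]; ring
  simpa [hc0] using hvanish (c⁻¹ * v)

open Multiplicative in
theorem isMulCommutative_comap_range_of_forall_conj_sq [Finite F] (h4 : 4 < Nat.card F)
    (h13 : (2 : F) ≠ 0 → 13 < Nat.card F) {G H : Type*} [Group G] [Group H] {φ : G →* H}
    (hφ : φ.ker ≤ center G) {f : Multiplicative F →* H} (hf : f.range ≤ φ.range)
    (hconj : ∀ t : F, t ≠ 0 → ∃ d, ∀ u, φ d * f (ofAdd u) * (φ d)⁻¹ = f (ofAdd (t ^ 2 * u))) :
    IsMulCommutative (f.range.comap φ) := by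
  choose s hs using fun u : F ↦ hf ⟨ofAdd u, rfl⟩
  have hcomm (u v : F) : Commute (φ (s u)) (φ (s v)) := by
    simpa only [hs] using (Commute.all (ofAdd u) (ofAdd v)).map f
  obtain ⟨a, b, ha, hb, hab, hne⟩ := exists_one_add_sq_eq_sq h4 h13
  have htriv : ∀ u v, ⁅s u, s v⁆ = 1 := by
    apply eq_one_of_biadditive_of_sq_mul_invariant (fun u v ↦ ⁅s u, s v⁆) _ _ _ ha hb hab hne
    · intro u u' v
      rw [← commutatorElement_mul_left_of_commute_map hφ (hcomm _ _)]
      exact commutatorElement_eq_of_map_eq hφ (by simp [hs]) rfl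
    · intro u v v'
      rw [← commutatorElement_mul_right_of_commute_map hφ (hcomm _ _)]
      exact commutatorElement_eq_of_map_eq hφ rfl (by simp [hs])
    · intro t ht u v
      obtain ⟨d, hd⟩ := hconj t ht
      calc ⁅s (t ^ 2 * u), s (t ^ 2 * v)⁆ = ⁅d * s u * d⁻¹, d * s v * d⁻¹⁆ :=
            commutatorElement_eq_of_map_eq hφ (by simp [hs, hd]) (by simp [hs, hd])
        _ = d * ⁅s u, s v⁆ * d⁻¹ := (conjugate_commutatorElement ..).symm
        _ = ⁅s u, s v⁆ := by
          rw [← (commute_commutatorElement_of_commute_map hφ (hcomm u v) d).eq,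
            mul_inv_cancel_right]
  refine le_centralizer_iff_isMulCommutative.mp fun g ⟨u, hu⟩ h ⟨v, hv⟩ ↦ ?_
  refine commutatorElement_eq_one_iff_mul_comm.mp ?_
  rw [commutatorElement_eq_of_map_eq hφ (hv.symm.trans (hs _).symm) (hu.symm.trans (hs _).symm)]
  exact htriv v.toAdd u.toAdd

end RootGroup

open Matrix MatrixGroups

section Matrices

variable {F : Type*} [Field F]

-- If `v` and `f v` form a basis, an endomorphism commuting with `f` is determined by its value
-- at `v`.
theorem exists_eq_smul_one_add_smul_of_commute_end {V : Type*} [AddCommGroup V] [Module F V]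
    (hV : Module.finrank F V = 2) {f g : Module.End F V} (hf : ∀ a : F, f ≠ a • 1)
    (h : Commute f g) : ∃ a b : F, g = a • 1 + b • f := by
  obtain ⟨v, hv⟩ : ∃ v, LinearIndependent F ![v, f v] := by
    have := Module.finite_of_finrank_eq_succ hV
    by_contra! hdep
    obtain ⟨a, ha⟩ := f.exists_eq_smul_id_of_forall_notLinearIndependent hdep
    exact hf a ha
  let e := basisOfLinearIndependentOfCardEqFinrank hv (by simp [hV])
  obtain ⟨a, b, hab⟩ : ∃ a b : F, g v = a • v + b • f v :=
    ⟨e.repr (g v) 0, e.repr (g v) 1, by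
      conv_lhs => rw [← e.sum_repr (g v), Fin.sum_univ_two]
      simp [e]⟩
  refine ⟨a, b, e.ext fun i ↦ ?_⟩
  have hcomm : g (f v) = f (g v) := (LinearMap.congr_fun h.eq v).symm
  fin_cases i <;> simp [e, hab, hcomm]

theorem det_smul_one_add_smul (M : Matrix (Fin 2) (Fin 2) F) (a b : F) :
    (a • (1 : Matrix (Fin 2) (Fin 2) F) + b • M).det =
      a ^ 2 + a * b * M.trace + b ^ 2 * M.det := by
  simp only [det_fin_two, trace_fin_two, Matrix.add_apply, Matrix.smul_apply, one_apply_eq,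
    smul_eq_mul, mul_one, ne_eq, zero_ne_one, one_ne_zero, not_false_eq_true, one_apply_ne,
    mul_zero, zero_add]
  ring

theorem discr_eq_zero_of_mem_range_scalar {M : Matrix (Fin 2) (Fin 2) F}
    (hM : M ∈ Set.range (scalar (Fin 2))) : M.discr = 0 := by
  obtain ⟨a, rfl⟩ := hM
  simp only [discr_fin_two, scalar_apply, trace_diagonal, det_diagonal, Finset.sum_const,
    Finset.prod_const, Finset.card_univ, Fintype.card_fin, nsmul_eq_mul, Nat.cast_ofNat]
  ring

theorem mul_self_eq_trace_smul_sub_det_smul (M : Matrix (Fin 2) (Fin 2) F) :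
    M * M = M.trace • M - M.det • (1 : Matrix (Fin 2) (Fin 2) F) := by
  have := aeval_self_charpoly M
  rw [charpoly_fin_two] at this
  simp only [sq, map_add, map_mul, Polynomial.aeval_sub, Polynomial.aeval_X, Polynomial.aeval_C,
    Algebra.algebraMap_eq_smul_one, smul_mul_assoc, one_mul] at this
  exact eq_sub_iff_add_eq.mpr (by rw [← sub_eq_zero, ← this]; abel)

theorem exists_eq_smul_one_add_smul_of_commute {M X : Matrix (Fin 2) (Fin 2) F}
    (hM : M ∉ Set.range (scalar (Fin 2))) (h : Commute M X) :
    ∃ a b : F, X = a • (1 : Matrix (Fin 2) (Fin 2) F) + b • M := by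
  obtain ⟨a, b, hab⟩ := exists_eq_smul_one_add_smul_of_commute_end (by simp)
    (f := toLinAlgEquiv' M) (g := toLinAlgEquiv' X)
    (fun a ha ↦ hM ⟨a, toLinAlgEquiv'.injective <| by
      rw [ha, scalar_apply, ← smul_one_eq_diagonal, map_smul, map_one]⟩)
    (h.map toLinAlgEquiv')
  exact ⟨a, b, toLinAlgEquiv'.injective <| by rw [hab, map_add, map_smul, map_smul, map_one]⟩

theorem commute_trans_of_notMem_center {M X Y : GL (Fin 2) F} (hM : M ∉ center (GL (Fin 2) F))
    (hX : Commute M X) (hY : Commute M Y) : Commute X Y := by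
  rw [GeneralLinearGroup.mem_center_iff_val_mem_range_scalar] at hM
  obtain ⟨a, b, hab⟩ := exists_eq_smul_one_add_smul_of_commute hM (hX.map (Units.coeHom _))
  rw [← Commute.units_val_iff] at hY ⊢
  rw [Units.coeHom_apply] at hab
  rw [hab]
  exact (((Commute.one_left _).smul_left a).add_left (hY.smul_left b))

theorem commute_or_mul_eq_neg_of_commute_mk {X Y : GL (Fin 2) F}
    (h : Commute (ProjGenLinGroup.mk X) (ProjGenLinGroup.mk Y)) :
    Commute X Y ∨ X * Y = -(Y * X) := by
  rw [commute_iff_eq, ← map_mul, ← map_mul, eq_comm, ProjGenLinGroup.mk_eq_mk_iff] at h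
  obtain ⟨u, hu⟩ := h
  have hsq : u ^ 2 = 1 := by
    simpa [mul_comm X.det] using congrArg GeneralLinearGroup.det hu
  rcases Units.eq_or_eq_neg_of_sq_eq_sq u 1 (hsq.trans (one_pow 2).symm) with rfl | rfl
  · exact .inl <| by simpa [commute_iff_eq] using hu.symm
  · exact .inr <| Units.ext <| by simp [← hu, ← smul_one_eq_diagonal]

theorem trace_eq_zero_of_mul_eq_neg {X Y : GL (Fin 2) F} (h2 : (2 : F) ≠ 0)
    (h : X * Y = -(Y * X)) : Y.val.trace = 0 := by
  have hconj : X * Y * X⁻¹ = -Y := by rw [h, neg_mul, mul_inv_cancel_right]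
  have htrace := trace_units_conj X (Y : Matrix (Fin 2) (Fin 2) F)
  rw [← Units.val_mul, ← Units.val_mul, hconj, Units.val_neg, trace_neg,
    neg_eq_iff_add_eq_zero, ← two_mul] at htrace
  exact (mul_eq_zero.mp htrace).resolve_left h2

theorem commute_of_commute_mk {X Y : GL (Fin 2) F}
    (h : Commute (ProjGenLinGroup.mk X) (ProjGenLinGroup.mk Y))
    (hY : (2 : F) = 0 ∨ Y.val.trace ≠ 0) : Commute X Y := by
  rcases commute_or_mul_eq_neg_of_commute_mk h with hcomm | hanti
  · exact hcomm
  have h2 : (2 : F) = 0 := by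
    by_contra h2
    exact hY.elim h2 fun hne ↦ hne (trace_eq_zero_of_mul_eq_neg h2 hanti)
  have := CharTwo.of_one_ne_zero_of_two_eq_zero one_ne_zero h2
  exact hanti.trans <| Units.ext <| CharTwo.neg_eq _

theorem two_eq_zero_or_trace_ne_zero_of_discr_eq_zero {M : GL (Fin 2) F}
    (hM : M.val.discr = 0) : (2 : F) = 0 ∨ M.val.trace ≠ 0 := by
  refine or_iff_not_imp_left.mpr fun h2 htrace ↦ ?_
  rw [discr_fin_two, htrace] at hM
  have h4 : (2 : F) ^ 2 * M.val.det = 0 := by linear_combination -hM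
  exact mul_ne_zero (pow_ne_zero 2 h2) M.det.ne_zero h4

theorem notMem_center_of_trace_eq_zero {M : GL (Fin 2) F} (h2 : (2 : F) ≠ 0)
    (hM : M.val.trace = 0) : M ∉ center (GL (Fin 2) F) := by
  rw [GeneralLinearGroup.mem_center_iff_val_mem_range_scalar]
  rintro ⟨a, ha⟩
  have ha0 : a = 0 := by simpa [← ha, h2] using hM
  exact M.ne_zero (by rw [← ha, ha0, map_zero])

theorem mk_mem_range_toPGL_iff_isSquare_det {X : GL (Fin 2) F} :
    ProjGenLinGroup.mk X ∈ (SpecialLinearGroup.toPGL (n := Fin 2) (R := F)).range ↔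
      IsSquare X.det := by
  constructor
  · rintro ⟨S, hS⟩
    obtain ⟨u, rfl⟩ := ProjGenLinGroup.mk_eq_mk_iff.mp hS
    exact ⟨u, by simp [sq]⟩
  · rintro ⟨c, hc⟩
    have hX : X.val.det = c * c := congrArg Units.val hc
    let S : SpecialLinearGroup (Fin 2) F := ⟨c⁻¹.val • X.val, by
      simp only [det_smul, hX, Fintype.card_fin, Units.val_inv_eq_inv_val]
      field_simp⟩
    have hS : (S : Matrix (Fin 2) (Fin 2) F) = c⁻¹.val • X.val := rfl
    refine ⟨S, ProjGenLinGroup.mk_eq_mk_iff.mpr ⟨c, Units.ext ?_⟩⟩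
    simp [hS, ← smul_one_eq_diagonal, smul_smul]

end Matrices

section Semisimple

variable {F : Type*} [Field F]

theorem nonempty_algHom_of_isAlgClosed (A K : Type*) [CommRing A] [Nontrivial A] [Algebra F A]
    [Algebra.IsIntegral F A] [Field K] [IsAlgClosed K] [Algebra F K] : Nonempty (A →ₐ[F] K) := by
  obtain ⟨m, hm⟩ := Ideal.exists_maximal A
  let := Ideal.Quotient.field m
  exact ⟨(IsAlgClosed.lift (R := F) (S := A ⧸ m)).comp (Ideal.Quotient.mkₐ F m)⟩

open scoped IsMulCommutative in
theorem exists_eigenvalue_monoidHom {M : GL (Fin 2) F} (hM : M ∉ center (GL (Fin 2) F))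
    (K : Type*) [Field K] [IsAlgClosed K] [Algebra F K] :
    ∃ (l : K) (χ : centralizer {M} →* K),
      l ^ 2 = algebraMap F K M.val.trace * l - algebraMap F K M.val.det ∧
      ∀ X : centralizer {M}, ∃ a b : F,
        (X.1 : Matrix (Fin 2) (Fin 2) F) = a • (1 : Matrix (Fin 2) (Fin 2) F) + b • M.1 ∧
        χ X = algebraMap F K a + algebraMap F K b * l := by
  rw [GeneralLinearGroup.mem_center_iff_val_mem_range_scalar] at hM
  let A := Algebra.adjoin F {(M : Matrix (Fin 2) (Fin 2) F)}
  obtain ⟨ρ⟩ := nonempty_algHom_of_isAlgClosed (F := F) A K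
  let m : A := ⟨M, Algebra.self_mem_adjoin_singleton F _⟩
  have hcomb (X : centralizer {M}) : ∃ a b : F,
      (X.1 : Matrix (Fin 2) (Fin 2) F) = (a • 1 + b • m : A) :=
    exists_eq_smul_one_add_smul_of_commute hM <|
      Commute.units_val <| (mem_centralizer_singleton_iff.mp X.2).symm
  have hmem (X : centralizer {M}) : (X.1 : Matrix (Fin 2) (Fin 2) F) ∈ A := by
    obtain ⟨a, b, h⟩ := hcomb X
    exact h ▸ SetLike.coe_mem _
  let toA := ((Units.coeHom _).comp (centralizer {M}).subtype).codRestrict A hmem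
  refine ⟨ρ m, (ρ : A →* K).comp toA, ?_, fun X ↦ ?_⟩
  · have := mul_self_eq_trace_smul_sub_det_smul (M : Matrix (Fin 2) (Fin 2) F)
    have hm : m ^ 2 = m.1.trace • m - m.1.det • 1 := Subtype.ext <| by simpa [sq] using this
    simpa [Algebra.smul_def] using congrArg ρ hm
  · obtain ⟨a, b, h⟩ := hcomb X
    refine ⟨a, b, h, ?_⟩
    have hX : (⟨X.1, hmem X⟩ : A) = a • 1 + b • m := Subtype.ext h
    exact (congrArg ρ hX).trans (by simp [Algebra.smul_def])

-- On the centralizer of `M`, the ratio `χ² / det` of the two eigenvalues is a character with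
-- scalar kernel.
theorem isCyclic_map_mk_centralizer_of_discr_ne_zero [Finite F] {M : GL (Fin 2) F}
    (hM : M.val.discr ≠ 0) : IsCyclic ((centralizer {M}).map ProjGenLinGroup.mk) := by
  let K := AlgebraicClosure F
  have hMc : M ∉ center (GL (Fin 2) F) := fun h ↦ hM <| discr_eq_zero_of_mem_range_scalar <|
    GeneralLinearGroup.mem_center_iff_val_mem_range_scalar.mp h
  obtain ⟨l, χ, hl, hχ⟩ := exists_eigenvalue_monoidHom hMc K
  have hderiv : 2 * l - algebraMap F K M.val.trace ≠ 0 := by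
    refine pow_ne_zero_iff two_ne_zero |>.mp ?_
    have : (2 * l - algebraMap F K M.val.trace) ^ 2 = algebraMap F K M.val.discr := by
      simp only [discr_fin_two, map_sub, map_mul, map_pow, map_ofNat]
      linear_combination 4 * hl
    rwa [this, map_ne_zero]
  let ψ : centralizer {M} →* Kˣ := χ.toHomUnits ^ 2 / (Units.map (algebraMap F K).toMonoidHom).comp
    (GeneralLinearGroup.det.comp (centralizer {M}).subtype)
  rw [← (centralizer {M}).range_subtype, MonoidHom.map_range]
  have : Finite ψ.range := .of_surjective _ ψ.rangeRestrict_surjective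
  refine isCyclic_range_of_ker_le (g := ψ) fun X hX ↦ ?_
  obtain ⟨a, b, hX', hχX⟩ := hχ X
  have hsq : χ X ^ 2 = algebraMap F K X.1.val.det := by
    simpa [ψ, MonoidHom.mem_ker, div_eq_one, Units.ext_iff] using hX
  have hprod : χ X * (2 * l - algebraMap F K M.val.trace) * algebraMap F K b = 0 := by
    rw [hX', det_smul_one_add_smul, hχX] at hsq
    simp only [map_add, map_mul, map_pow] at hsq
    rw [hχX]
    linear_combination hsq + algebraMap F K b ^ 2 * hl
  have hb : b = 0 := by
    simpa [(show χ X ≠ 0 from (χ.toHomUnits X).ne_zero), hderiv] using hprod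
  rw [MonoidHom.mem_ker, MonoidHom.comp_apply, ProjGenLinGroup.mk_eq_one,
    GeneralLinearGroup.mem_center_iff_val_mem_range_scalar]
  exact ⟨a, by simp [hX', hb, smul_one_eq_diagonal]⟩

end Semisimple

section Parabolic

variable {F : Type*} [Field F]

theorem exists_two_mul_eq_and_sq_eq [Finite F] {t d : F} (h : t ^ 2 = 4 * d) :
    ∃ l : F, 2 * l = t ∧ l ^ 2 = d := by
  by_cases h2 : (2 : F) = 0
  · have := CharTwo.of_one_ne_zero_of_two_eq_zero one_ne_zero h2
    obtain ⟨l, rfl⟩ := FiniteField.isSquare_of_char_two (ringChar.eq F 2) d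
    refine ⟨l, ?_, sq l⟩
    have ht : t ^ 2 = 0 := by linear_combination h + 2 * l * l * h2
    rw [pow_eq_zero_iff two_ne_zero |>.mp ht, h2, zero_mul]
  · exact ⟨t / 2, mul_div_cancel₀ t h2, by field_simp; linear_combination h⟩

theorem exists_eq_smul_one_add_of_discr_eq_zero [Finite F] {M : Matrix (Fin 2) (Fin 2) F}
    (hM : M.discr = 0) :
    ∃ (l : F) (N : Matrix (Fin 2) (Fin 2) F), M = l • 1 + N ∧ N.trace = 0 ∧ N.det = 0 := by
  rw [discr_fin_two, sub_eq_zero] at hM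
  obtain ⟨l, hl, hl2⟩ := exists_two_mul_eq_and_sq_eq hM
  rw [trace_fin_two] at hl
  rw [det_fin_two] at hl2
  refine ⟨l, M - l • 1, by abel, ?_, ?_⟩
  · simp only [trace_sub, trace_smul, trace_one, Fintype.card_fin, Nat.cast_ofNat, smul_eq_mul,
      trace_fin_two]
    linear_combination -hl
  · simp only [det_fin_two, Matrix.sub_apply, Matrix.smul_apply, one_apply_eq, smul_eq_mul,
      mul_one, ne_eq, zero_ne_one, one_ne_zero, not_false_eq_true, one_apply_ne, mul_zero, sub_zero]
    linear_combination l * hl - hl2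

section Unipotent

variable {N : Matrix (Fin 2) (Fin 2) F} (htrace : N.trace = 0) (hdet : N.det = 0)
include htrace hdet

theorem mul_self_eq_zero_of_trace_eq_zero_of_det_eq_zero : N * N = 0 := by
  rw [mul_self_eq_trace_smul_sub_det_smul, htrace, hdet, zero_smul, zero_smul, sub_zero]

/-- The one-parameter unipotent subgroup `u ↦ 1 + uN` of `SL(2, F)` generated by a nilpotent
matrix `N`. -/
def unipotentHom : Multiplicative F →* SpecialLinearGroup (Fin 2) F where
  toFun u := ⟨1 + u.toAdd • N, by
    simpa [htrace, hdet] using det_smul_one_add_smul N 1 u.toAdd⟩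
  map_one' := Subtype.ext <| by simp
  map_mul' u v := Subtype.ext <| by
    have hN := mul_self_eq_zero_of_trace_eq_zero_of_det_eq_zero htrace hdet
    change 1 + (u.toAdd + v.toAdd) • N = (1 + u.toAdd • N) * (1 + v.toAdd • N)
    simp [add_smul, add_mul, mul_add, hN, add_assoc]

theorem coe_unipotentHom (u : F) :
    (unipotentHom htrace hdet (.ofAdd u) : Matrix (Fin 2) (Fin 2) F) = 1 + u • N := rfl

-- If `N ≠ 0`, then `D` is the scaling by `t` on `ker N` and by `t⁻¹` modulo `ker N`.
theorem exists_specialLinearGroup_mul_eq_sq_smul_mul {t : F} (ht : t ≠ 0) :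
    ∃ D : SpecialLinearGroup (Fin 2) F, D.1 * N = t ^ 2 • (N * D.1) := by
  have h11 : N 1 1 = -N 0 0 := by
    rw [trace_fin_two] at htrace
    linear_combination htrace
  have hsq : N 0 0 ^ 2 = -(N 0 1 * N 1 0) := by
    rw [det_fin_two, h11] at hdet
    linear_combination -hdet
  by_cases h01 : N 0 1 = 0
  · have h00 : N 0 0 = 0 := by simpa [h01] using hsq
    refine ⟨⟨!![t⁻¹, 0; 0, t], by simp [ht]⟩, ?_⟩
    rw [← Matrix.ext_iff]
    simp only [Fin.forall_fin_two, mul_apply, Fin.sum_univ_two, Matrix.smul_apply, smul_eq_mul,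
      of_apply, cons_val', cons_val_fin_one, cons_val_zero, cons_val_one, h00, h11, h01, mul_zero,
      zero_mul, add_zero, zero_add, neg_zero, true_and, and_true]
    field_simp
  · refine ⟨⟨!![t, 0; -(N 0 0 / N 0 1) * (t - t⁻¹), t⁻¹], by simp [ht]⟩, ?_⟩
    rw [← Matrix.ext_iff]
    simp only [Fin.forall_fin_two, mul_apply, Fin.sum_univ_two, Matrix.smul_apply, smul_eq_mul,
      of_apply, cons_val', cons_val_fin_one, cons_val_zero, cons_val_one, h11, zero_mul, mul_zero,
      add_zero, zero_add, mul_neg, neg_mul]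
    refine ⟨⟨?_, ?_⟩, ?_, ?_⟩ <;> field_simp
    · ring
    · ring
    · linear_combination (1 - t ^ 4) * hsq
    · ring

theorem exists_conj_unipotentHom_eq {t : F} (ht : t ≠ 0) :
    ∃ D, ∀ u : F, D * unipotentHom htrace hdet (.ofAdd u) * D⁻¹ =
      unipotentHom htrace hdet (.ofAdd (t ^ 2 * u)) := by
  obtain ⟨D, hD⟩ := exists_specialLinearGroup_mul_eq_sq_smul_mul htrace hdet ht
  refine ⟨D, fun u ↦ mul_inv_eq_iff_eq_mul.mpr <| Subtype.ext ?_⟩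
  change D.1 * (1 + u • N) = (1 + (t ^ 2 * u) • N) * D.1
  simp only [mul_add, add_mul, mul_one, one_mul, mul_smul_comm, smul_mul_assoc, hD, smul_smul,
    mul_comm u]

theorem map_mk_centralizer_le_range_unipotentHom {M : GL (Fin 2) F}
    (hMc : M ∉ center (GL (Fin 2) F)) {l : F}
    (hM : (M : Matrix (Fin 2) (Fin 2) F) = l • 1 + N) :
    (centralizer {M}).map ProjGenLinGroup.mk ≤
      (SpecialLinearGroup.toPGL.comp (unipotentHom htrace hdet)).range := by
  rw [GeneralLinearGroup.mem_center_iff_val_mem_range_scalar] at hMc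
  rintro - ⟨X, hX, rfl⟩
  obtain ⟨a, b, hab⟩ := exists_eq_smul_one_add_smul_of_commute hMc <|
    Commute.units_val <| (mem_centralizer_singleton_iff.mp hX).symm
  have hXN : (X : Matrix (Fin 2) (Fin 2) F) = (a + b * l) • 1 + b • N := by
    rw [hab, hM]
    module
  have hc : a + b * l ≠ 0 := by
    have := X.det.ne_zero
    simpa [hXN, det_smul_one_add_smul, htrace, hdet] using this
  refine ⟨.ofAdd (b / (a + b * l)), ProjGenLinGroup.mk_eq_mk_iff.mpr ⟨.mk0 _ hc, Units.ext ?_⟩⟩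
  rw [hXN]
  simp [coe_unipotentHom, ← smul_one_eq_diagonal, smul_smul, mul_div_cancel₀ _ hc]

end Unipotent

end Parabolic

section LiftedCentralizer

variable {F : Type*} [Field F] {G : Type*} [Group G]

/-- The preimage in `G` of the image in `PGL(2, F)` of the centralizer of the matrix `M`. It can be
smaller than the preimage of the centralizer of the image of `M`, which also contains the elements
whose matrices anticommute with `M`. -/
def liftedCentralizer (φ : G →* PGL(2, F)) (M : GL (Fin 2) F) : Subgroup G :=
  ((centralizer {M}).map ProjGenLinGroup.mk).comap φ

/-- A matrix is thick for a subgroup `P` of `PGL(2, F)` if it commutes with a non-scalar matrix of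
nonzero trace whose image lies in `P`. For traceless `M` in odd characteristic, this says that the
image in `PGL(2, F)` of the centralizer of `M` meets `P` in more than the identity and the image
of `M`. -/
def IsThick (P : Subgroup PGL(2, F)) (M : GL (Fin 2) F) : Prop :=
  ∃ X, Commute M X ∧ X ∉ center (GL (Fin 2) F) ∧ X.val.trace ≠ 0 ∧ ProjGenLinGroup.mk X ∈ P

theorem mem_liftedCentralizer_iff_commute {φ : G →* PGL(2, F)} {M X : GL (Fin 2) F} {g : G}
    (hX : ProjGenLinGroup.mk X = φ g) : g ∈ liftedCentralizer φ M ↔ Commute M X := by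
  refine ⟨fun ⟨Y, hY, hYg⟩ ↦ ?_, fun h ↦ ⟨X, mem_centralizer_singleton_iff.mpr h.eq.symm, hX⟩⟩
  obtain ⟨u, rfl⟩ := ProjGenLinGroup.mk_eq_mk_iff.mp (hYg.trans hX.symm)
  have hu : GeneralLinearGroup.scalar (Fin 2) u ∈ center (GL (Fin 2) F) :=
    ProjGenLinGroup.mk_eq_one.mp (ProjGenLinGroup.mk_scalar u)
  have hMY : Commute M Y := (mem_centralizer_singleton_iff.mp hY).symm
  exact hMY.mul_right (mem_center_iff.mp hu M)

theorem liftedCentralizer_le_of_commute (φ : G →* PGL(2, F)) {M X : GL (Fin 2) F}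
    (hM : M ∉ center (GL (Fin 2) F)) (h : Commute M X) :
    liftedCentralizer φ M ≤ liftedCentralizer φ X := by
  refine comap_mono (map_mono fun Y hY ↦ mem_centralizer_singleton_iff.mpr ?_)
  exact (commute_trans_of_notMem_center hM (mem_centralizer_singleton_iff.mp hY).symm h).eq

theorem commute_of_commute_of_trace {φ : G →* PGL(2, F)} {X Y : GL (Fin 2) F} {x y : G}
    (hX : ProjGenLinGroup.mk X = φ x) (hY : ProjGenLinGroup.mk Y = φ y) (h : Commute x y)
    (hY0 : (2 : F) = 0 ∨ Y.val.trace ≠ 0) : Commute X Y :=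
  commute_of_commute_mk (by rw [hX, hY]; exact h.map φ) hY0

theorem centralizer_le_liftedCentralizer {φ : G →* PGL(2, F)} {Z : GL (Fin 2) F} {z : G}
    (hZ : ProjGenLinGroup.mk Z = φ z) (hZ0 : (2 : F) = 0 ∨ Z.val.trace ≠ 0) :
    centralizer {z} ≤ liftedCentralizer φ Z := fun g hg ↦ by
  obtain ⟨X, hX⟩ := ProjGenLinGroup.mk_surjective (φ g)
  exact (mem_liftedCentralizer_iff_commute hX).mpr
    (commute_of_commute_of_trace hX hZ (mem_centralizer_singleton_iff.mp hg) hZ0).symm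

theorem mul_mem_liftedCentralizer_of_commute {φ : G →* PGL(2, F)} {Z : GL (Fin 2) F} {z g h : G}
    (hZ : ProjGenLinGroup.mk Z = φ z) (hg : Commute g z) (hh : Commute h z)
    (hgZ : g ∉ liftedCentralizer φ Z) (hhZ : h ∉ liftedCentralizer φ Z) :
    g * h ∈ liftedCentralizer φ Z := by
  have exists_anticommuting {w : G} (hw : Commute w z) (hwZ : w ∉ liftedCentralizer φ Z) :
      ∃ X, ProjGenLinGroup.mk X = φ w ∧ X * Z = -(Z * X) := by
    obtain ⟨X, hX⟩ := ProjGenLinGroup.mk_surjective (φ w)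
    have hmk : Commute (ProjGenLinGroup.mk X) (ProjGenLinGroup.mk Z) := by
      rw [hX, hZ]
      exact hw.map φ
    exact ⟨X, hX, (commute_or_mul_eq_neg_of_commute_mk hmk).resolve_left fun hXZ ↦
      hwZ <| (mem_liftedCentralizer_iff_commute hX).mpr hXZ.symm⟩
  obtain ⟨X, hX, hXZ⟩ := exists_anticommuting hg hgZ
  obtain ⟨Y, hY, hYZ⟩ := exists_anticommuting hh hhZ
  refine (mem_liftedCentralizer_iff_commute (X := X * Y) (by simp [hX, hY])).mpr ?_
  rw [commute_iff_eq, mul_assoc, hYZ, mul_neg, ← mul_assoc X, hXZ, neg_mul, neg_neg, mul_assoc]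

section CentralKernel

variable {φ : G →* PGL(2, F)} (hφ : φ.ker ≤ center G)
include hφ

theorem notMem_center_of_mk_eq {Z : GL (Fin 2) F} {z : G} (hz : z ∉ center G)
    (hZ : ProjGenLinGroup.mk Z = φ z) : Z ∉ center (GL (Fin 2) F) := fun h ↦
  hz <| hφ <| hZ.symm.trans <| ProjGenLinGroup.mk_eq_one.mpr h

theorem isMulCommutative_liftedCentralizer_of_discr_ne_zero [Finite F] {M : GL (Fin 2) F}
    (hM : M.val.discr ≠ 0) : IsMulCommutative (liftedCentralizer φ M) := by
  have := isCyclic_map_mk_centralizer_of_discr_ne_zero hM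
  refine (φ.subgroupComap _).isMulCommutative_of_isCyclic_of_ker_le_center fun g hg ↦ ?_
  have hgφ : φ g = 1 := congrArg Subtype.val hg
  exact mem_center_iff.mpr fun h ↦ Subtype.ext (mem_center_iff.mp (hφ hgφ) h)

theorem isMulCommutative_centralizer_of_discr_eq_zero [Finite F]
    (hsl : SpecialLinearGroup.toPGL.range ≤ φ.range) {z : G} (hz : z ∉ center G)
    {Z : GL (Fin 2) F} (hZ : ProjGenLinGroup.mk Z = φ z) (hdiscr : Z.val.discr = 0) :
    IsMulCommutative (centralizer {z}) := by
  obtain ⟨l, N, hZN, htrace, hdet⟩ := exists_eq_smul_one_add_of_discr_eq_zero hdiscr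
  let f := SpecialLinearGroup.toPGL.comp (unipotentHom htrace hdet)
  have hle : centralizer {z} ≤ f.range.comap φ :=
    (centralizer_le_liftedCentralizer hZ
      (two_eq_zero_or_trace_ne_zero_of_discr_eq_zero hdiscr)).trans <| comap_mono <|
        map_mk_centralizer_le_range_unipotentHom htrace hdet (notMem_center_of_mk_eq hφ hz hZ) hZN
  obtain ⟨p, hp, hcard | ⟨h4, h13⟩⟩ := exists_prime_card_dvd_sq_or_lt_card (F := F)
  · refine isMulCommutative_centralizer_of_card_map_dvd_sq hφ hp hz ?_
    calc Nat.card ((centralizer {z}).map φ)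
      _ ∣ Nat.card f.range := card_dvd_of_le (map_le_iff_le_comap.mpr hle)
      _ ∣ Nat.card F := card_range_dvd f
      _ ∣ p ^ 2 := hcard
  · have hf : f.range ≤ φ.range := by
      rintro - ⟨u, rfl⟩
      exact hsl ⟨_, rfl⟩
    have := isMulCommutative_comap_range_of_forall_conj_sq h4 h13 hφ hf fun t ht ↦ by
      obtain ⟨D, hD⟩ := exists_conj_unipotentHom_eq htrace hdet ht
      obtain ⟨d, hd⟩ := hsl ⟨D, rfl⟩
      exact ⟨d, fun u ↦ by simp only [hd, f, MonoidHom.comp_apply, ← hD, map_mul, map_inv]⟩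
    exact isMulCommutative_of_le hle

theorem isMulCommutative_centralizer_of_two_eq_zero_or_trace_ne_zero [Finite F]
    (hsl : SpecialLinearGroup.toPGL.range ≤ φ.range) {z : G} (hz : z ∉ center G)
    {Z : GL (Fin 2) F} (hZ : ProjGenLinGroup.mk Z = φ z)
    (hZ0 : (2 : F) = 0 ∨ Z.val.trace ≠ 0) : IsMulCommutative (centralizer {z}) := by
  by_cases hdiscr : Z.val.discr = 0
  · exact isMulCommutative_centralizer_of_discr_eq_zero hφ hsl hz hZ hdiscr
  · have := isMulCommutative_liftedCentralizer_of_discr_ne_zero hφ hdiscr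
    exact isMulCommutative_of_le (centralizer_le_liftedCentralizer hZ hZ0)

section Involution

variable (h2 : (2 : F) ≠ 0) {Z : GL (Fin 2) F} (htrace : Z.val.trace = 0)
include h2 htrace

theorem isMulCommutative_liftedCentralizer_of_trace_eq_zero [Finite F] :
    IsMulCommutative (liftedCentralizer φ Z) :=
  isMulCommutative_liftedCentralizer_of_discr_ne_zero hφ fun h ↦
    (two_eq_zero_or_trace_ne_zero_of_discr_eq_zero h).elim h2 fun h ↦ h htrace

theorem commute_of_mem_liftedCentralizer_of_not_isThick (hthin : ¬ IsThick φ.range Z) {z t g : G}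
    (hz : z ∉ center G) (hZ : ProjGenLinGroup.mk Z = φ z) (ht : t ∈ liftedCentralizer φ Z)
    (hg : Commute g z) : Commute g t := by
  obtain ⟨X, hX⟩ := ProjGenLinGroup.mk_surjective (φ t)
  have hZX := (mem_liftedCentralizer_iff_commute hX).mp ht
  by_cases hXc : X ∈ center (GL (Fin 2) F)
  · exact mem_center_iff.mp (hφ <| hX.symm.trans <| ProjGenLinGroup.mk_eq_one.mpr hXc) g
  have hXtrace : X.val.trace = 0 := by
    by_contra hne
    exact hthin ⟨X, hZX, hXc, hne, hX ▸ ⟨t, rfl⟩⟩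
  have hZc := notMem_center_of_mk_eq hφ hz hZ
  rw [GeneralLinearGroup.mem_center_iff_val_mem_range_scalar] at hZc
  obtain ⟨a, b, hab⟩ := exists_eq_smul_one_add_smul_of_commute hZc hZX.units_val
  have ha : a = 0 := by
    simpa [hab, htrace, h2] using hXtrace
  have hb : b ≠ 0 := by
    rintro rfl
    exact X.ne_zero (by simp [hab, ha])
  have htz : φ z = φ t := by
    rw [← hX, ← hZ, ProjGenLinGroup.mk_eq_mk_iff]
    exact ⟨.mk0 b hb, Units.ext <| by simp [hab, ha, ← smul_one_eq_diagonal]⟩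
  have hcentral : Commute g (z⁻¹ * t) :=
    mem_center_iff.mp (hφ <| by simp [MonoidHom.mem_ker, htz]) g
  simpa using hg.mul_right hcentral

-- Two elements of `C(z)` outside the lifted centralizer have their product inside it.
theorem isMulCommutative_centralizer_of_not_isThick (hthin : ¬ IsThick φ.range Z) {z : G}
    (hz : z ∉ center G) (hZ : ProjGenLinGroup.mk Z = φ z) :
    IsMulCommutative (centralizer {z}) := by
  refine le_centralizer_iff_isMulCommutative.mp fun h hh g hg ↦ ?_
  replace hg : Commute g z := mem_centralizer_singleton_iff.mp hg
  replace hh : Commute h z := mem_centralizer_singleton_iff.mp hh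
  have commute_of_mem {t w : G} (ht : t ∈ liftedCentralizer φ Z) (hw : Commute w z) :
      Commute w t :=
    commute_of_mem_liftedCentralizer_of_not_isThick hφ h2 htrace hthin hz hZ ht hw
  by_cases hgZ : g ∈ liftedCentralizer φ Z
  · exact (commute_of_mem hgZ hh).eq.symm
  by_cases hhZ : h ∈ liftedCentralizer φ Z
  · exact (commute_of_mem hhZ hg).eq
  have hgh := commute_of_mem (mul_mem_liftedCentralizer_of_commute hZ hg hh hgZ hhZ) hg
  exact mul_left_cancel (hgh.eq.trans (mul_assoc ..))

theorem centralizer_eq_liftedCentralizer_of_isThick [Finite F] (hthick : IsThick φ.range Z) {x : G}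
    (hx : x ∉ center G) (hmin : IsMinCentralizer x)
    (hxZ : x ∈ liftedCentralizer φ Z) : centralizer {x} = liftedCentralizer φ Z := by
  have := isMulCommutative_liftedCentralizer_of_trace_eq_zero hφ h2 htrace
  have hge : liftedCentralizer φ Z ≤ centralizer {x} :=
    (le_centralizer _).trans <| centralizer_le <| Set.singleton_subset_iff.mpr hxZ
  obtain ⟨Y, hZY, hYc, hYtrace, t, ht⟩ := hthick
  have hle : centralizer {t} ≤ liftedCentralizer φ Z :=
    (centralizer_le_liftedCentralizer ht.symm (.inr hYtrace)).trans <|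
      liftedCentralizer_le_of_commute φ hYc hZY.symm
  exact hge.antisymm' <| (hmin.centralizer_eq_of_le hx (hle.trans hge)).ge.trans hle

theorem centralizer_eq_liftedCentralizer_of_le [Finite F]
    (hthick : ∀ X : GL (Fin 2) F, X.val.trace = 0 → ProjGenLinGroup.mk X ∈ φ.range →
      IsThick φ.range X)
    {x z : G} (hZ : ProjGenLinGroup.mk Z = φ z) (hx : x ∉ center G) (hmin : IsMinCentralizer x)
    (hle : centralizer {x} ≤ centralizer {z}) : centralizer {x} = liftedCentralizer φ Z := by
  refine centralizer_eq_liftedCentralizer_of_isThick hφ h2 htrace (hthick Z htrace ⟨z, hZ.symm⟩)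
    hx hmin ?_
  obtain ⟨X, hX⟩ := ProjGenLinGroup.mk_surjective (φ x)
  refine (mem_liftedCentralizer_iff_commute hX).mpr (by_contra fun hZX ↦ hZX ?_)
  have hxz : Commute x z :=
    mem_centralizer_singleton_iff.mp (hle (mem_centralizer_singleton_iff.mpr rfl))
  have hXtrace : X.val.trace = 0 := by
    by_contra hne
    exact hZX <| commute_of_commute_of_trace hZ hX hxz.symm (.inr hne)
  have hXthick := hthick X hXtrace ⟨x, hX.symm⟩
  obtain ⟨Y, hXY, hYc, hYtrace, t, ht⟩ := hXthick
  have htx : t ∈ centralizer {x} := by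
    rw [centralizer_eq_liftedCentralizer_of_isThick hφ h2 hXtrace ⟨Y, hXY, hYc, hYtrace, t, ht⟩
      hx hmin ((mem_liftedCentralizer_iff_commute hX).mpr (.refl X))]
    exact (mem_liftedCentralizer_iff_commute ht.symm).mpr hXY
  have hZY : Commute Z Y := commute_of_commute_of_trace hZ ht.symm
    (mem_centralizer_singleton_iff.mp (hle htx) : Commute t z).symm (.inr hYtrace)
  exact commute_trans_of_notMem_center hYc hZY.symm hXY.symm

end Involution

theorem isFminGroup_of_ker_le_center [Finite F] (hsl : SpecialLinearGroup.toPGL.range ≤ φ.range)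
    (hthick : ∀ M M' : GL (Fin 2) F, (2 : F) ≠ 0 → M.val.trace = 0 → M'.val.trace = 0 →
      ProjGenLinGroup.mk M ∈ φ.range → ProjGenLinGroup.mk M' ∈ φ.range →
      IsThick φ.range M → IsThick φ.range M') :
    IsFminGroup G := by
  refine .of_forall_exists_centralizer_eq fun z hz ↦ ?_
  by_cases hcomm : IsMulCommutative (centralizer {z})
  · exact ⟨centralizer {z}, fun x _ _ hle ↦ centralizer_singleton_eq_of_le hle⟩
  obtain ⟨Z, hZ⟩ := ProjGenLinGroup.mk_surjective (φ z)
  obtain ⟨h2, htrace⟩ : (2 : F) ≠ 0 ∧ Z.val.trace = 0 := by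
    contrapose! hcomm
    exact isMulCommutative_centralizer_of_two_eq_zero_or_trace_ne_zero hφ hsl hz hZ
      (or_iff_not_imp_left.mpr hcomm)
  have hZthick : IsThick φ.range Z := by
    contrapose! hcomm
    exact isMulCommutative_centralizer_of_not_isThick hφ h2 htrace hcomm hz hZ
  exact ⟨liftedCentralizer φ Z, fun x hx hmin hle ↦
    centralizer_eq_liftedCentralizer_of_le hφ h2 htrace
      (fun X hXtrace hX ↦ hthick Z X h2 htrace hXtrace ⟨z, hZ.symm⟩ hX hZthick) hZ hx hmin hle⟩

end CentralKernel

end LiftedCentralizer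

section Thick

variable {F : Type*} [Field F] {P : Subgroup PGL(2, F)} {M : GL (Fin 2) F}

theorem isThick_iff_of_trace_eq_zero (h2 : (2 : F) ≠ 0) (htrace : M.val.trace = 0) :
    IsThick P M ↔ ∃ (a b : F) (X : GL (Fin 2) F), a ≠ 0 ∧ b ≠ 0 ∧
      X.val = a • (1 : Matrix (Fin 2) (Fin 2) F) + b • M.val ∧ ProjGenLinGroup.mk X ∈ P := by
  have hMc := notMem_center_of_trace_eq_zero h2 htrace
  rw [GeneralLinearGroup.mem_center_iff_val_mem_range_scalar] at hMc
  constructor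
  · rintro ⟨X, hMX, hXc, hXtrace, hXP⟩
    obtain ⟨a, b, hab⟩ := exists_eq_smul_one_add_smul_of_commute hMc hMX.units_val
    refine ⟨a, b, X, ?_, ?_, hab, hXP⟩
    · rintro rfl
      exact hXtrace (by simp [hab, htrace])
    · rintro rfl
      rw [GeneralLinearGroup.mem_center_iff_val_mem_range_scalar] at hXc
      exact hXc ⟨a, by simp [hab, smul_one_eq_diagonal]⟩
  · rintro ⟨a, b, X, ha, hb, hab, hXP⟩
    refine ⟨X, ?_, fun hXc ↦ hMc ?_, by simp [hab, htrace, h2, ha], hXP⟩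
    · rw [← Commute.units_val_iff, hab]
      exact ((Commute.one_right _).smul_right a).add_right ((Commute.refl _).smul_right b)
    · obtain ⟨c, hc⟩ := GeneralLinearGroup.mem_center_iff_val_mem_range_scalar.mp hXc
      refine ⟨b⁻¹ * (c - a), ?_⟩
      rw [scalar_apply, ← smul_one_eq_diagonal] at hc ⊢
      rw [mul_smul, sub_smul, hc, hab, add_sub_cancel_left, inv_smul_smul₀ hb]

open Polynomial in
theorem isThick_top_of_trace_eq_zero [Finite F] (h2 : (2 : F) ≠ 0) (hcard : 3 < Nat.card F)
    (htrace : M.val.trace = 0) : IsThick ⊤ M := by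
  have := Fintype.ofFinite F
  rw [Nat.card_eq_fintype_card] at hcard
  let P : F[X] := X * (1 + C M.val.det * X ^ 2)
  have hdeg : P.natDegree = 3 := by
    have := M.det.ne_zero
    unfold P
    compute_degree!
  obtain ⟨b, hb⟩ := exists_eval_ne_zero_of_natDegree_lt_card P
    (ne_zero_of_natDegree_gt (n := 2) (by lia))
    (by rw [hdeg, Cardinal.mk_fintype]; exact_mod_cast hcard)
  simp only [P, eval_mul, eval_add, eval_pow, eval_X, eval_one, eval_C, mul_ne_zero_iff] at hb
  obtain ⟨hb, hdet⟩ := hb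
  have hX : ((1 : F) • (1 : Matrix (Fin 2) (Fin 2) F) + b • M.val).det ≠ 0 := by
    rwa [det_smul_one_add_smul, htrace, mul_zero, add_zero, one_pow, mul_comm]
  exact (isThick_iff_of_trace_eq_zero h2 htrace).mpr
    ⟨1, b, .mkOfDetNeZero _ hX, one_ne_zero, hb, rfl, mem_top _⟩

-- As both determinants are squares, `det (a + bM)` is the determinant of some `a + tM'`.
theorem IsThick.of_mk_mem_range_toPGL (h2 : (2 : F) ≠ 0) {M' : GL (Fin 2) F}
    (htrace : M.val.trace = 0) (htrace' : M'.val.trace = 0)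
    (hM : ProjGenLinGroup.mk M ∈ (SpecialLinearGroup.toPGL (n := Fin 2) (R := F)).range)
    (hM' : ProjGenLinGroup.mk M' ∈ (SpecialLinearGroup.toPGL (n := Fin 2) (R := F)).range)
    (h : IsThick (SpecialLinearGroup.toPGL (n := Fin 2) (R := F)).range M) :
    IsThick (SpecialLinearGroup.toPGL (n := Fin 2) (R := F)).range M' := by
  obtain ⟨c, hc⟩ := mk_mem_range_toPGL_iff_isSquare_det.mp hM
  obtain ⟨c', hc'⟩ := mk_mem_range_toPGL_iff_isSquare_det.mp hM'
  obtain ⟨a, b, X, ha, hb, hX, hXmem⟩ := (isThick_iff_of_trace_eq_zero h2 htrace).mp h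
  have hdet : (a • (1 : Matrix (Fin 2) (Fin 2) F) + (b * c / c') • M'.val).det = X.val.det := by
    have hMdet : M.val.det = c * c := congrArg Units.val hc
    have hMdet' : M'.val.det = c' * c' := congrArg Units.val hc'
    rw [hX, det_smul_one_add_smul, det_smul_one_add_smul, htrace, htrace', hMdet, hMdet',
      mul_zero, mul_zero]
    field_simp
  let X' := GeneralLinearGroup.mkOfDetNeZero _ (hdet.trans_ne X.det.ne_zero)
  have hX' : X'.det = X.det := Units.ext hdet
  refine (isThick_iff_of_trace_eq_zero h2 htrace').mpr
    ⟨a, b * c / c', X', ha, by simp [hb], rfl, ?_⟩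
  rwa [mk_mem_range_toPGL_iff_isSquare_det, hX', ← mk_mem_range_toPGL_iff_isSquare_det]

end Thick

section Quotients

variable {F : Type*} [Field F] [Finite F] {G : Type*} [Group G]

theorem isFminGroup_of_injective {ψ : G ⧸ center G →* PGL(2, F)} (hψ : Function.Injective ψ)
    (hsl : SpecialLinearGroup.toPGL.range ≤ ψ.range)
    (hthick : ∀ M M' : GL (Fin 2) F, (2 : F) ≠ 0 → M.val.trace = 0 → M'.val.trace = 0 →
      ProjGenLinGroup.mk M ∈ ψ.range → ProjGenLinGroup.mk M' ∈ ψ.range →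
      IsThick ψ.range M → IsThick ψ.range M') : IsFminGroup G := by
  have hker : (ψ.comp (QuotientGroup.mk' (center G))).ker ≤ center G := by
    rw [MonoidHom.ker_comp_of_injective _ _ hψ, QuotientGroup.ker_mk']
  have hrange : (ψ.comp (QuotientGroup.mk' (center G))).range = ψ.range := by
    rw [MonoidHom.range_comp, QuotientGroup.range_mk', ← MonoidHom.range_eq_map]
  rw [← hrange] at hsl hthick
  exact isFminGroup_of_ker_le_center hker hsl hthick

theorem isFminGroup_of_mulEquiv_PSL2 (e : G ⧸ center G ≃* PSL2 F) : IsFminGroup G := by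
  let ψ : G ⧸ center G →* PGL(2, F) := ProjectiveSpecialLinearGroup.toPGL.comp e.toMonoidHom
  have hψ : Function.Injective ψ :=
    ProjectiveSpecialLinearGroup.toPGL_injective.comp e.injective
  have hrange : ψ.range = SpecialLinearGroup.toPGL.range := by
    ext x
    constructor
    · rintro ⟨g, rfl⟩
      obtain ⟨S, hS⟩ := QuotientGroup.mk_surjective (e g)
      exact ⟨S, congrArg ProjectiveSpecialLinearGroup.toPGL hS⟩
    · rintro ⟨S, rfl⟩
      exact ⟨e.symm S, congrArg ProjectiveSpecialLinearGroup.toPGL (e.apply_symm_apply S)⟩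
  refine isFminGroup_of_injective hψ hrange.ge ?_
  rw [hrange]
  exact fun _ _ h2 ↦ IsThick.of_mk_mem_range_toPGL h2

theorem isFminGroup_of_mulEquiv_PGL2 (hcard : 3 < Nat.card F) (e : G ⧸ center G ≃* PGL2 F) :
    IsFminGroup G := by
  let ψ : G ⧸ center G →* PGL(2, F) := e.toMonoidHom
  have hrange : ψ.range = ⊤ := MonoidHom.range_eq_top.mpr e.surjective
  exact isFminGroup_of_injective (ψ := ψ) e.injective (hrange ▸ le_top)
    fun _ _ h2 _ htrace _ _ _ ↦ hrange ▸ isThick_top_of_trace_eq_zero h2 hcard htrace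

end Quotients

theorem psl_pgl_isFmin_general (G : Type*) [Group G] (F : Type*) [Field F] [Finite F]
    (h : Nonempty ((G ⧸ center G) ≃* PSL2 F) ∨
      3 < Nat.card F ∧ Nonempty ((G ⧸ center G) ≃* PGL2 F)) : IsFminGroup G := by
  rcases h with ⟨⟨e⟩⟩ | ⟨hcard, ⟨e⟩⟩
  · exact isFminGroup_of_mulEquiv_PSL2 e
  · exact isFminGroup_of_mulEquiv_PGL2 hcard e

theorem psl_pgl_isFmin (G : Type*) [Group G] [Finite G] (p n : ℕ)
    (hp : p.Prime) (hn : 1 ≤ n) (hpn : 3 < p ^ n)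
    (F : Type*) [Field F] [Fintype F] (hF : Nat.card F = p ^ n)
    (h : Nonempty ((G ⧸ center G) ≃* PSL2 F) ∨
         Nonempty ((G ⧸ center G) ≃* PGL2 F)) :
    IsFminGroup G :=
  psl_pgl_isFmin_general G F (h.imp_right fun e ↦ ⟨hF ▸ hpn, e⟩)
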